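/- arXiv:2005.11956 — 3 statements merged into one kernel-verified Lean document; each statement's English description precedes it below -/
import Mathlib

section
/- Let Γ be a finitely generated group, N ≥ 1, and c_1,…,c_N ∈ ℕ with n := Σ_{i=1}^N i·c_i ≥ 1. Then the number of homomorphisms φ : Γ → S_n such that for each i ∈ {1,…,N} the action of φ(Γ) on {1,…,n} has exactly c_i orbits of size i (and no orbits of size greater than N) equals n! · Π_{i=1}^N a_i(Γ)^{c_i} / ( i^{c_i} · c_i! ). -/
open Filter Topology Asymptotics
open scoped TensorProduct

/-- `a_n(G)`: the number of index `n` subgroups of `G`. -/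
noncomputable def subgroupCount (G : Type*) [Group G] (n : ℕ) : ℕ :=
  Nat.card {H : Subgroup G // H.index = n}

/-- the number of orbits of size `i` of the action of `φ(G)` on `{1,…,n}` -/
noncomputable def orbitCount {G : Type*} [Group G] {n : ℕ}
    (φ : G →* Equiv.Perm (Fin n)) (i : ℕ) : ℕ :=
  Nat.card {O : Set (Fin n) // (∃ x : Fin n, O = {y | ∃ γ : G, φ γ x = y}) ∧ O.ncard = i}


namespace HomCount

variable {Γ : Type*} [Group Γ] {n : ℕ}

/-- orbit of a point -/
def orb (φ : Γ →* Equiv.Perm (Fin n)) (x : Fin n) : Set (Fin n) := {y | ∃ γ : Γ, φ γ x = y}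

/-- stabilizer of a point -/
def stab (φ : Γ →* Equiv.Perm (Fin n)) (x : Fin n) : Subgroup Γ :=
  (MulAction.stabilizer (Equiv.Perm (Fin n)) x).comap φ

lemma mem_stab (φ : Γ →* Equiv.Perm (Fin n)) (x : Fin n) (γ : Γ) :
    γ ∈ stab φ x ↔ φ γ x = x := by
  simp [stab, Subgroup.mem_comap, MulAction.mem_stabilizer_iff]

lemma mem_orb_self (φ : Γ →* Equiv.Perm (Fin n)) (x : Fin n) : x ∈ orb φ x := ⟨1, by simp⟩

lemma orb_eq_of_mem (φ : Γ →* Equiv.Perm (Fin n)) {x y : Fin n} (h : y ∈ orb φ x) :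
    orb φ y = orb φ x := by
  obtain ⟨γ, rfl⟩ := h
  ext z
  constructor
  · rintro ⟨δ, rfl⟩
    exact ⟨δ * γ, by simp⟩
  · rintro ⟨δ, rfl⟩
    exact ⟨δ * γ⁻¹, by simp⟩

lemma index_stab (φ : Γ →* Equiv.Perm (Fin n)) (x : Fin n) :
    (stab φ x).index = (orb φ x).ncard := by
  let _ := MulAction.compHom (Fin n) φ
  have h := MulAction.index_stabilizer Γ x
  have h1 : MulAction.stabilizer Γ x = stab φ x := by
    ext γ
    rw [mem_stab]
    exact MulAction.mem_stabilizer_iff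
  rw [← h1, h]
  rfl

/-- index type of orbits -/
abbrev Idx (N : ℕ) (c : ℕ → ℕ) := Σ i : Finset.Icc 1 N, Fin (c i)

variable {N : ℕ} {c : ℕ → ℕ}

/-- `b` is a system of base points -/
def Good (φ : Γ →* Equiv.Perm (Fin n)) (b : Idx N c → Fin n) : Prop :=
  (∀ k, (orb φ (b k)).ncard = (k.1 : ℕ)) ∧ Function.Injective (fun k => orb φ (b k))

lemma sum_idx (hn : n = ∑ i ∈ Finset.Icc 1 N, i * c i) :
    ∑ k : Idx N c, (k.1 : ℕ) = n := by
  rw [Fintype.sum_sigma, hn, ← Finset.sum_coe_sort (Finset.Icc 1 N) (fun i => i * c i)]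
  simp [mul_comm]

lemma Good.cover (hn : n = ∑ i ∈ Finset.Icc 1 N, i * c i)
    {φ : Γ →* Equiv.Perm (Fin n)} {b : Idx N c → Fin n} (h : Good φ b) (x : Fin n) :
    ∃ k, x ∈ orb φ (b k) := by
  classical
  let F : (Σ k : Idx N c, orb φ (b k)) → Fin n := fun p => p.2.1
  have hF : Function.Injective F := by
    rintro ⟨k, x, hx⟩ ⟨k', x', hx'⟩ (he : x = x')
    subst he
    have : k = k' := h.2 (by
      show orb φ (b k) = orb φ (b k')
      rw [← orb_eq_of_mem φ hx, ← orb_eq_of_mem φ hx'])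
    subst this
    rfl
  have hc : Nat.card (Σ k : Idx N c, orb φ (b k)) = Nat.card (Fin n) := by
    rw [Nat.card_sigma, Nat.card_fin]
    refine Eq.trans ?_ (sum_idx hn)
    exact Finset.sum_congr rfl fun k _ => by rw [Nat.card_coe_set_eq, h.1 k]
  have hb := (Nat.bijective_iff_injective_and_card F).2 ⟨hF, hc⟩
  obtain ⟨⟨k, y, hy⟩, rfl⟩ := hb.2 x
  exact ⟨k, hy⟩

/-- orbits of size `i` -/
abbrev Orb (φ : Γ →* Equiv.Perm (Fin n)) (i : ℕ) :=
  {O : Set (Fin n) // (∃ x : Fin n, O = orb φ x) ∧ O.ncard = i}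

lemma orbitCount_eq (φ : Γ →* Equiv.Perm (Fin n)) (i : ℕ) :
    orbitCount φ i = Nat.card (Orb φ i) := rfl

/-- the condition in the theorem -/
def P (N : ℕ) (c : ℕ → ℕ) (φ : Γ →* Equiv.Perm (Fin n)) : Prop :=
  (∀ i ∈ Finset.Icc 1 N, orbitCount φ i = c i) ∧ (∀ x : Fin n, (orb φ x).ncard ≤ N)

lemma Good.P (hn : n = ∑ i ∈ Finset.Icc 1 N, i * c i)
    {φ : Γ →* Equiv.Perm (Fin n)} {b : Idx N c → Fin n} (h : Good φ b) : P N c φ := by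
  constructor
  · intro i hi
    rw [orbitCount_eq, ← Nat.card_fin (c i)]
    symm
    refine Nat.card_eq_of_bijective
      (fun j => (⟨orb φ (b ⟨⟨i, hi⟩, j⟩), ⟨_, rfl⟩, h.1 _⟩ : Orb φ i)) ⟨?_, ?_⟩
    · intro j j' hj
      have := h.2 (Subtype.ext_iff.1 hj)
      simpa using this
    · rintro ⟨O, ⟨x, rfl⟩, hO⟩
      obtain ⟨⟨⟨i', hi'⟩, j⟩, hk⟩ := h.cover hn x
      have e := orb_eq_of_mem φ hk
      have h1 := h.1 ⟨⟨i', hi'⟩, j⟩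
      rw [← e, hO] at h1
      subst h1
      exact ⟨j, Subtype.ext e.symm⟩
  · intro x
    obtain ⟨k, hk⟩ := h.cover hn x
    rw [orb_eq_of_mem φ hk, h.1 k]
    exact (Finset.mem_Icc.1 k.1.2).2

/-- base points for the orbits of size `i` -/
abbrev T (φ : Γ →* Equiv.Perm (Fin n)) (i m : ℕ) :=
  {b : Fin m → Fin n // (∀ j, (orb φ (b j)).ncard = i) ∧ Function.Injective fun j => orb φ (b j)}

lemma card_T (φ : Γ →* Equiv.Perm (Fin n)) (i m : ℕ) (h : orbitCount φ i = m) :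
    Nat.card (T φ i m) = i ^ m * m.factorial := by
  classical
  have e : Nat.card (Σ e : Fin m ↪ Orb φ i, ∀ j, (e j).1) = Nat.card (T φ i m) := by
    have key : ∀ (e : Fin m ↪ Orb φ i) (f : ∀ j, (e j).1) (j), orb φ (f j).1 = (e j).1 := by
      intro e f j
      obtain ⟨x, hx⟩ := (e j).2.1
      have : (f j).1 ∈ orb φ x := hx.subset (f j).2
      exact (orb_eq_of_mem φ this).trans hx.symm
    refine Nat.card_eq_of_bijective (fun p => ⟨fun j => (p.2 j).1, ?_, ?_⟩) ⟨?_, ?_⟩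
    · intro j
      rw [key]; exact (p.1 j).2.2
    · intro j j' hj
      simp only [key] at hj
      exact p.1.injective (Subtype.ext hj)
    · rintro ⟨e, f⟩ ⟨e', f'⟩ h
      have h1 : ∀ j, (f j).1 = (f' j).1 := fun j => congrFun (Subtype.ext_iff.1 h) j
      have : e = e' := by
        ext1 j
        apply Subtype.ext
        rw [← key e f, ← key e' f', h1]
      subst this
      congr
      funext j
      exact Subtype.ext (h1 j)
    · rintro ⟨b, hb1, hb2⟩
      exact ⟨⟨⟨fun j => ⟨orb φ (b j), ⟨_, rfl⟩, hb1 j⟩, fun j j' hj => hb2 (Subtype.ext_iff.1 hj)⟩,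
        fun j => ⟨b j, mem_orb_self φ _⟩⟩, rfl⟩
  rw [← e, Nat.card_sigma]
  have : ∀ e : Fin m ↪ Orb φ i, Nat.card (∀ j, (e j).1) = i ^ m := by
    intro e
    rw [Nat.card_pi]
    simp only [Nat.card_coe_set_eq, (e _).2.2]
    simp
  simp only [this, Finset.sum_const, smul_eq_mul]
  rw [Finset.card_univ, Fintype.card_embedding_eq, ← Nat.card_eq_fintype_card, ← orbitCount_eq, h]
  simp [Nat.descFactorial_self, mul_comm]

lemma card_good (φ : Γ →* Equiv.Perm (Fin n)) (h : P N c φ) :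
    Nat.card {b : Idx N c → Fin n // Good φ b} =
      ∏ i ∈ Finset.Icc 1 N, (i ^ c i * (c i).factorial) := by
  rw [← Finset.prod_coe_sort (Finset.Icc 1 N) (fun i => i ^ c i * (c i).factorial)]
  have : ∀ i : Finset.Icc 1 N, (i : ℕ) ^ c i * (c i).factorial = Nat.card (T φ i (c i)) :=
    fun i => (card_T φ i (c i) (h.1 i i.2)).symm
  rw [Finset.prod_congr rfl fun i _ => this i, ← Nat.card_pi]
  symm
  refine Nat.card_eq_of_bijective (fun t => ⟨fun k => (t k.1).1 k.2, ?_, ?_⟩) ⟨?_, ?_⟩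
  · intro k
    exact (t k.1).2.1 k.2
  · rintro ⟨i, j⟩ ⟨i', j'⟩ hk
    have : i = i' := by
      apply Subtype.ext
      rw [← (t i).2.1 j, ← (t i').2.1 j']
      exact congrArg Set.ncard hk
    subst this
    have : j = j' := (t i).2.2 hk
    rw [this]
  · intro t t' ht
    funext i
    apply Subtype.ext
    funext j
    exact congrFun (Subtype.ext_iff.1 ht) ⟨i, j⟩
  · rintro ⟨b, hb⟩
    refine ⟨fun i => ⟨fun j => b ⟨i, j⟩, fun j => hb.1 _, fun j j' hj => ?_⟩, rfl⟩
    simpa using hb.2 hj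

/-- pairs of a homomorphism and base points -/
abbrev B (Γ : Type*) [Group Γ] (n N : ℕ) (c : ℕ → ℕ) :=
  {p : (Γ →* Equiv.Perm (Fin n)) × (Idx N c → Fin n) // Good p.1 p.2}

/-- fibres of constant finite size -/
lemma card_fiber {α β : Type*} (f : α → β) (m : ℕ) (hm : m ≠ 0)
    (h : ∀ y, Nat.card {x // f x = y} = m) : Nat.card α = Nat.card β * m := by
  have e : ∀ y, {x // f x = y} ≃ Fin m := fun y =>
    haveI : Finite {x // f x = y} := Nat.finite_of_card_ne_zero (by rw [h]; exact hm)
    Finite.equivFinOfCardEq (h y)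
  rw [Nat.card_congr ((Equiv.sigmaFiberEquiv f).symm.trans
    ((Equiv.sigmaCongrRight e).trans (Equiv.sigmaEquivProd _ _))), Nat.card_prod, Nat.card_fin]

lemma card_B_left (hn : n = ∑ i ∈ Finset.Icc 1 N, i * c i) :
    Nat.card (B Γ n N c) = Nat.card {φ : Γ →* Equiv.Perm (Fin n) // P N c φ} *
      ∏ i ∈ Finset.Icc 1 N, (i ^ c i * (c i).factorial) := by
  refine card_fiber (fun p => ⟨p.1.1, p.2.P hn⟩) _ ?_ ?_
  · refine Finset.prod_ne_zero_iff.2 fun i hi => ?_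
    have := (Finset.mem_Icc.1 hi).1
    positivity
  · rintro ⟨φ, hφ⟩
    rw [← card_good φ hφ]
    symm
    refine Nat.card_eq_of_bijective (fun b => ⟨⟨(φ, b.1), b.2⟩, rfl⟩) ⟨?_, ?_⟩
    · rintro ⟨b, hb⟩ ⟨b', hb'⟩ h
      simpa using h
    · rintro ⟨⟨⟨φ', b⟩, hb⟩, h⟩
      obtain rfl : φ' = φ := Subtype.ext_iff.1 h
      exact ⟨⟨b, hb⟩, rfl⟩

/-- tuples of subgroups -/
abbrev Sub (Γ : Type*) [Group Γ] (N : ℕ) (c : ℕ → ℕ) :=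
  ∀ k : Idx N c, {H : Subgroup Γ // H.index = (k.1 : ℕ)}

lemma card_Sub : Nat.card (Sub Γ N c) = ∏ i ∈ Finset.Icc 1 N, subgroupCount Γ i ^ c i := by
  rw [Nat.card_pi, Fintype.prod_sigma,
    ← Finset.prod_coe_sort (Finset.Icc 1 N) (fun i => subgroupCount Γ i ^ c i)]
  simp [subgroupCount]

/-- the model `Γ`-set -/
abbrev X (H : Sub Γ N c) := Σ k : Idx N c, Γ ⧸ (H k).1

lemma card_X (hn : n = ∑ i ∈ Finset.Icc 1 N, i * c i) (H : Sub Γ N c) :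
    Finite (X H) ∧ Nat.card (X H) = n := by
  have hf : ∀ k, Finite (Γ ⧸ (H k).1) := fun k => by
    apply Nat.finite_of_card_ne_zero
    have h1 := (H k).2
    have h2 := (Finset.mem_Icc.1 k.1.2).1
    rw [Subgroup.index] at h1
    omega
  refine ⟨inferInstance, ?_⟩
  rw [Nat.card_sigma, ← sum_idx hn]
  exact Finset.sum_congr rfl fun k _ => (H k).2

/-- transported action -/
def act (H : Sub Γ N c) (f : X H ≃ Fin n) : Γ →* Equiv.Perm (Fin n) :=
  (f.permCongrHom.toMonoidHom).comp (MulAction.toPermHom Γ (X H))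

lemma act_apply (H : Sub Γ N c) (f : X H ≃ Fin n) (γ : Γ) (k) (q : Γ ⧸ (H k).1) :
    act H f γ (f ⟨k, q⟩) = f ⟨k, γ • q⟩ := by
  simp [act, Equiv.permCongrHom, Equiv.permCongr]

/-- transported base points -/
def base (H : Sub Γ N c) (f : X H ≃ Fin n) (k : Idx N c) : Fin n := f ⟨k, ((1 : Γ) : Γ ⧸ (H k).1)⟩

lemma act_base (H : Sub Γ N c) (f : X H ≃ Fin n) (γ : Γ) (k) :
    act H f γ (base H f k) = f ⟨k, (γ : Γ ⧸ (H k).1)⟩ := by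
  rw [base, act_apply]
  congr 2
  show ((γ * 1 : Γ) : Γ ⧸ (H k).1) = _
  rw [mul_one]

lemma stab_base (H : Sub Γ N c) (f : X H ≃ Fin n) (k) :
    stab (act H f) (base H f k) = (H k).1 := by
  ext γ
  rw [mem_stab, act_base, base, f.apply_eq_iff_eq]
  simp only [Sigma.mk.injEq, heq_eq_eq, true_and]
  rw [eq_comm, QuotientGroup.eq]
  simp

lemma good_base (H : Sub Γ N c) (f : X H ≃ Fin n) : Good (act H f) (base H f) := by
  constructor
  · intro k
    rw [← index_stab, stab_base, (H k).2]
  · intro k k' h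
    have h1 : base H f k' ∈ orb (act H f) (base H f k) := by
      have h2 : orb (act H f) (base H f k) = orb (act H f) (base H f k') := h
      rw [h2]; exact mem_orb_self _ _
    obtain ⟨γ, hγ⟩ := h1
    rw [act_base, base, f.apply_eq_iff_eq] at hγ
    exact (Sigma.mk.inj_iff.1 hγ).1

lemma card_B_right (hn : n = ∑ i ∈ Finset.Icc 1 N, i * c i) :
    Nat.card (B Γ n N c) = Nat.card (Sub Γ N c) * n.factorial := by
  refine card_fiber (fun p k => ⟨stab p.1.1 (p.1.2 k), by rw [index_stab, p.2.1]⟩) _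
    (Nat.factorial_ne_zero n) ?_
  intro H
  obtain ⟨hfin, hX⟩ := card_X hn H
  have hc : Nat.card (X H ≃ Fin n) = n.factorial := by
    rw [Nat.card_congr (Equiv.equivCongr (Finite.equivFinOfCardEq hX) (Equiv.refl (Fin n)))]
    rw [Nat.card_perm, Nat.card_fin]
  rw [← hc]
  symm
  refine Nat.card_eq_of_bijective (fun f => ⟨⟨(act H f, base H f), good_base H f⟩, ?_⟩) ⟨?_, ?_⟩
  · funext k
    exact Subtype.ext (stab_base H f k)
  · intro f f' h
    have h1 := Subtype.ext_iff.1 (Subtype.ext_iff.1 h)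
    have ha : act H f = act H f' := congrArg Prod.fst h1
    have hb : base H f = base H f' := congrArg Prod.snd h1
    ext1 ⟨k, q⟩
    induction q using QuotientGroup.induction_on with
    | H γ => rw [← act_base, ← act_base, ha, hb]
  · rintro ⟨⟨⟨φ, b⟩, hb⟩, h⟩
    have hs : ∀ k, stab φ (b k) = (H k).1 := fun k => Subtype.ext_iff.1 (congrFun h k)
    have hq : ∀ k (γ δ : Γ), φ γ (b k) = φ δ (b k) ↔ (γ : Γ ⧸ (H k).1) = δ := by
      intro k γ δ
      rw [QuotientGroup.eq, ← hs, mem_stab, map_mul, Equiv.Perm.mul_apply, map_inv,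
        Equiv.Perm.inv_eq_iff_eq, eq_comm]
    let F : X H → Fin n := fun p => Quotient.liftOn' p.2 (fun γ => φ γ (b p.1)) (by
      intro γ δ hγ
      exact (hq _ _ _).2 (Quotient.sound' hγ))
    have hF : ∀ k (γ : Γ), F ⟨k, (γ : Γ ⧸ (H k).1)⟩ = φ γ (b k) := fun _ _ => rfl
    have hbij : Function.Bijective F := by
      constructor
      · rintro ⟨k, q⟩ ⟨k', q'⟩ he
        induction q using QuotientGroup.induction_on with
        | H γ =>
        induction q' using QuotientGroup.induction_on with
        | H δ =>
        rw [hF, hF] at he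
        have : k = k' := hb.2 (by
          show orb φ (b k) = orb φ (b k')
          rw [← orb_eq_of_mem φ (⟨γ, rfl⟩ : φ γ (b k) ∈ orb φ (b k)), he]
          exact orb_eq_of_mem φ ⟨δ, rfl⟩)
        subst this
        rw [(hq _ _ _).1 he]
      · intro x
        obtain ⟨k, γ, hγ⟩ := hb.cover hn x
        exact ⟨⟨k, (γ : Γ ⧸ (H k).1)⟩, hγ⟩
    refine ⟨Equiv.ofBijective F hbij, ?_⟩
    apply Subtype.ext
    apply Subtype.ext
    refine Prod.ext ?_ ?_
    · ext1 γ
      ext1 x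
      obtain ⟨⟨k, q⟩, rfl⟩ := (Equiv.ofBijective F hbij).surjective x
      show act H _ γ _ = _
      rw [act_apply]
      induction q using QuotientGroup.induction_on with
      | H δ =>
        show φ (γ * δ) (b k) = φ γ (φ δ (b k))
        simp
    · funext k
      show φ 1 (b k) = b k
      simp

end HomCount

theorem hom_count_by_orbit_type (Γ : Type*) [Group Γ] (hfg : Group.FG Γ)
    (N : ℕ) (hN : 1 ≤ N) (c : ℕ → ℕ) (n : ℕ)
    (hn : n = ∑ i ∈ Finset.Icc 1 N, i * c i) (hn1 : 1 ≤ n) :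
    (Nat.card {φ : Γ →* Equiv.Perm (Fin n) //
        (∀ i ∈ Finset.Icc 1 N, orbitCount φ i = c i) ∧
        (∀ x : Fin n, ({y | ∃ γ : Γ, φ γ x = y} : Set (Fin n)).ncard ≤ N)} : ℚ) =
      (n.factorial : ℚ) * ∏ i ∈ Finset.Icc 1 N,
        (subgroupCount Γ i : ℚ) ^ (c i) / ((i : ℚ) ^ (c i) * (Nat.factorial (c i))) := by
  have h := (HomCount.card_B_left (Γ := Γ) hn).symm.trans (HomCount.card_B_right hn)
  rw [HomCount.card_Sub] at h
  have h' := congrArg (Nat.cast : ℕ → ℚ) h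
  push_cast at h'
  rw [Finset.prod_div_distrib, mul_div_assoc', eq_div_iff, mul_comm (n.factorial : ℚ)]
  · exact h'
  · refine Finset.prod_ne_zero_iff.2 fun i hi => ?_
    have := (Finset.mem_Icc.1 hi).1
    positivity
end

section
/- Let p, l, r ≥ 1. Then τ_{p,l,r} ≤ (1/(r·l))^{r/p} · exp( Σ_{i | p} (r·l)^{i/p} / (i·l) ), where τ_{p,l,r} := Σ_{k ∈ K(p,l,r)} Π_{j=1}^{p} 1/( (l·j)^{k_j} · k_j! ) and K(p, l, r) := { k ∈ ℕ^p : Σ_{i=1}^p k_i · i = r and k_i = 0 whenever gcd(i·l, p) ≠ i }, the sum in the exponential running over all positive divisors i of p. -/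
open Filter Topology Asymptotics
open scoped TensorProduct

/-- `τ_{p,l,r} = Σ_{k ∈ K(p,l,r)} Π_{j=1}^{p} 1/((l·j)^{k_j} k_j!)`, where `K(p,l,r)` is the
set of `k ∈ ℕ^p` with `Σ_j j·k_j = r` and `k_j = 0` whenever `gcd(j·l, p) ≠ j`. -/
noncomputable def tauQ (p l r : ℕ) : ℚ :=
  ∑ k ∈ Finset.filter
      (fun k => (∑ j : Fin p, (j.1 + 1) * k j) = r ∧
        ∀ j : Fin p, Nat.gcd ((j.1 + 1) * l) p ≠ j.1 + 1 → k j = 0)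
      (Fintype.piFinset fun _ : Fin p => Finset.range (r + 1)),
    ∏ j : Fin p, 1 / ((l * (j.1 + 1) : ℚ) ^ (k j) * (Nat.factorial (k j)))

theorem tau_bound (p l r : ℕ) (hp : 1 ≤ p) (hl : 1 ≤ l) (hr : 1 ≤ r) :
    ((tauQ p l r : ℚ) : ℝ) ≤ (1 / ((r : ℝ) * (l : ℝ))) ^ ((r : ℝ) / (p : ℝ)) *
      Real.exp (∑ i ∈ p.divisors, ((r : ℝ) * (l : ℝ)) ^ ((i : ℝ) / (p : ℝ)) / ((i : ℝ) * (l : ℝ))) := by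
  have hl' : (0 : ℝ) < l := by exact_mod_cast hl
  have hr' : (0 : ℝ) < r := by exact_mod_cast hr
  have hrl : (0 : ℝ) < (r : ℝ) * l := by positivity
  obtain ⟨x, hx⟩ : ∃ x : ℝ, x = ((r : ℝ) * l) ^ (1 / (p : ℝ)) := ⟨_, rfl⟩
  have hx0 : 0 < x := by rw [hx]; positivity
  have hxi : ∀ i : ℕ, ((r : ℝ) * (l : ℝ)) ^ ((i : ℝ) / (p : ℝ)) = x ^ i := by
    intro i
    rw [hx, ← Real.rpow_natCast, ← Real.rpow_mul hrl.le]
    congr 1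
    ring
  have h1 : (1 / ((r : ℝ) * (l : ℝ))) ^ ((r : ℝ) / (p : ℝ)) = (x ^ r)⁻¹ := by
    rw [one_div, Real.inv_rpow hrl.le, hxi]
  simp only [hxi, h1]
  obtain ⟨B, hB⟩ : ∃ B : ℕ → ℝ, ∀ i, B i =
      if Nat.gcd (i * l) p = i then x ^ i / ((i : ℝ) * l) else 0 := ⟨_, fun _ => rfl⟩
  have hB0 : ∀ i, 0 ≤ B i := by
    intro i
    rw [hB]
    split_ifs
    · positivity
    · exact le_rfl
  have hsum : ∑ j : Fin p, B (j.1 + 1) ≤ ∑ i ∈ p.divisors, x ^ i / ((i : ℝ) * l) := by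
    have e1 : ∑ j : Fin p, B (j.1 + 1) = ∑ i ∈ Finset.Ico 1 (p + 1), B i := by
      rw [Fin.sum_univ_eq_sum_range (fun j => B (j + 1)) p, Finset.sum_Ico_eq_sum_range]
      simp [add_comm]
    rw [e1]
    have e2 : ∑ i ∈ p.divisors, B i = ∑ i ∈ Finset.Ico 1 (p + 1), B i := by
      apply Finset.sum_subset
      · intro i hi
        have := Nat.pos_of_mem_divisors hi
        have := Nat.divisor_le hi
        simp; omega
      · intro i hi hn
        rw [hB, if_neg]
        intro h
        apply hn
        rw [Nat.mem_divisors]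
        exact ⟨h ▸ Nat.gcd_dvd_right _ _, by omega⟩
    rw [← e2]
    apply Finset.sum_le_sum
    intro i _
    rw [hB]
    split_ifs
    · exact le_rfl
    · positivity
  rw [inv_mul_eq_div, le_div_iff₀ (by positivity)]
  refine le_trans ?_ (Real.exp_le_exp.2 hsum)
  rw [Real.exp_sum]
  calc ((tauQ p l r : ℚ) : ℝ) * x ^ r
      = ∑ k ∈ Finset.filter
          (fun k => (∑ j : Fin p, (j.1 + 1) * k j) = r ∧
            ∀ j : Fin p, Nat.gcd ((j.1 + 1) * l) p ≠ j.1 + 1 → k j = 0)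
          (Fintype.piFinset fun _ : Fin p => Finset.range (r + 1)),
        ∏ j : Fin p, B (j.1 + 1) ^ (k j) / (Nat.factorial (k j)) := by
        rw [tauQ]
        push_cast
        rw [Finset.sum_mul]
        apply Finset.sum_congr rfl
        intro k hk
        obtain ⟨-, h2, h3⟩ := Finset.mem_filter.1 hk
        have : x ^ r = ∏ j : Fin p, (x ^ (j.1 + 1)) ^ k j := by
          rw [← h2, ← Finset.prod_pow_eq_pow_sum]
          simp only [pow_mul]
        rw [this, ← Finset.prod_mul_distrib]
        apply Finset.prod_congr rfl
        intro j _
        rw [hB]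
        split_ifs with h
        · push_cast
          rw [div_pow, mul_comm (l : ℝ)]
          field_simp
        · simp [h3 j h]
    _ ≤ ∑ k ∈ (Fintype.piFinset fun _ : Fin p => Finset.range (r + 1)),
        ∏ j : Fin p, B (j.1 + 1) ^ (k j) / (Nat.factorial (k j)) := by
        apply Finset.sum_le_sum_of_subset_of_nonneg (Finset.filter_subset _ _)
        intro k _ _
        exact Finset.prod_nonneg fun j _ => div_nonneg (pow_nonneg (hB0 _) _) (by positivity)
    _ = ∏ j : Fin p, ∑ m ∈ Finset.range (r + 1), B (j.1 + 1) ^ m / (Nat.factorial m) := by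
        rw [Finset.prod_univ_sum]
    _ ≤ ∏ j : Fin p, Real.exp (B (j.1 + 1)) := by
        apply Finset.prod_le_prod
        · intro j _
          exact Finset.sum_nonneg fun m _ => div_nonneg (pow_nonneg (hB0 _) _) (by positivity)
        · intro j _
          exact Real.sum_le_exp_of_nonneg (hB0 _) _
end

section
/- Let (a_n)_{n ∈ ℕ} be a real sequence and suppose there exist C > 0, α > 0, β_1,…,β_m ∈ ℝ and γ_1,…,γ_m ∈ (0,1] such that a_n ∼ C · exp( α·n·log n + Σ_{i=1}^m β_i · n^{γ_i} ) as n → ∞ (i.e. the ratio tends to 1). Then Σ_{k=1}^{n−1} a_k · a_{n−k} / a_n = O( n^{−α} ) as n → ∞. -/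
open Filter Topology Asymptotics
open scoped TensorProduct

lemma rds_bdd (f : ℕ → ℝ) (hf : f =o[atTop] (fun n : ℕ => (n : ℝ))) (ε : ℝ) (hε : 0 < ε) :
    ∃ M, 0 ≤ M ∧ ∀ j : ℕ, f j ≤ ε * j + M := by
  have h := hf.bound hε
  have h2 : IsBoundedUnder (· ≤ ·) atTop (fun j : ℕ => f j - ε * j) := by
    refine ⟨0, ?_⟩
    rw [eventually_map]
    filter_upwards [h] with j hj
    have := le_abs_self (f j)
    simp only [Real.norm_eq_abs, Nat.abs_cast] at hj
    linarith
  obtain ⟨M, hM⟩ := h2.bddAbove_range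
  refine ⟨max M 0, le_max_right _ _, fun j => ?_⟩
  have := hM ⟨j, rfl⟩
  have := le_max_left M 0
  simp only at *
  linarith

lemma rds_pow (β γ : ℝ) (hγ : 0 < γ ∧ γ ≤ 1) (ε : ℝ) (hε : 0 < ε) :
    ∃ M, 0 ≤ M ∧ ∀ j l : ℕ,
      β * ((j : ℝ) ^ γ + (l : ℝ) ^ γ - ((j : ℝ) + l) ^ γ) ≤ ε * j + M := by
  rcases hγ.2.eq_or_lt with h1 | h1
  · refine ⟨0, le_rfl, fun j l => ?_⟩
    subst h1
    simp only [Real.rpow_one]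
    have : 0 ≤ ε * j := by positivity
    nlinarith
  · have ho : (fun j : ℕ => |β| * (j : ℝ) ^ γ) =o[atTop] (fun n : ℕ => (n : ℝ)) := by
      refine IsLittleO.const_mul_left ?_ _
      have ht : Tendsto (fun x : ℝ => x ^ (-(1 - γ))) atTop (𝓝 0) :=
        tendsto_rpow_neg_atTop (by linarith)
      have ht2 := ht.comp (tendsto_natCast_atTop_atTop (R := ℝ))
      refine (isLittleO_iff_tendsto' ?_).2 (ht2.congr' ?_)
      · filter_upwards [eventually_gt_atTop 0] with n hn h
        have : (0 : ℝ) < n := by exact_mod_cast hn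
        linarith
      · filter_upwards [eventually_gt_atTop 0] with n hn
        have : (0 : ℝ) < n := by exact_mod_cast hn
        simp only [Function.comp]
        rw [neg_sub, Real.rpow_sub_one this.ne']
    obtain ⟨M, hM0, hM⟩ := rds_bdd _ ho ε hε
    refine ⟨M, hM0, fun j l => le_trans ?_ (hM j)⟩
    have hj : (0 : ℝ) ≤ j := j.cast_nonneg
    have hl : (0 : ℝ) ≤ l := l.cast_nonneg
    have a1 : ((j : ℝ) + l) ^ γ ≤ (j : ℝ) ^ γ + (l : ℝ) ^ γ :=
      Real.rpow_add_le_add_rpow hj hl hγ.1.le hγ.2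
    have a2 : (l : ℝ) ^ γ ≤ ((j : ℝ) + l) ^ γ :=
      Real.rpow_le_rpow hl (by linarith) hγ.1.le
    calc β * ((j : ℝ) ^ γ + (l : ℝ) ^ γ - ((j : ℝ) + l) ^ γ)
        ≤ |β| * ((j : ℝ) ^ γ + (l : ℝ) ^ γ - ((j : ℝ) + l) ^ γ) :=
          mul_le_mul_of_nonneg_right (le_abs_self _) (by linarith)
      _ ≤ |β| * (j : ℝ) ^ γ := mul_le_mul_of_nonneg_left (by linarith) (abs_nonneg _)

/-- The exponent. -/
noncomputable def rdsPhi (α : ℝ) {m : ℕ} (β γ : Fin m → ℝ) (x : ℝ) : ℝ :=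
  α * x * Real.log x + ∑ i, β i * x ^ (γ i)

lemma rds_key (α : ℝ) (hα : 0 < α) (m : ℕ) (β γ : Fin m → ℝ)
    (hγ : ∀ i, 0 < γ i ∧ γ i ≤ 1) :
    ∃ M ε : ℝ, 0 < ε ∧ ∀ j l : ℕ, 1 ≤ j → j ≤ l →
      rdsPhi α β γ j + rdsPhi α β γ l - rdsPhi α β γ ((j : ℝ) + l)
        ≤ M - ε * j - α * Real.log ((j : ℝ) + l) := by
  have hlog2 : 0 < Real.log 2 := Real.log_pos (by norm_num)
  set L := α * Real.log 2 with hL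
  have hLpos : 0 < L := by positivity
  have hε' : 0 < L / 3 / (m + 1) := by positivity
  choose Mi hMi0 hMi using fun i => rds_pow (β i) (γ i) (hγ i) _ hε'
  have ho : (fun j : ℕ => α * Real.log j) =o[atTop] (fun n : ℕ => (n : ℝ)) := by
    refine IsLittleO.const_mul_left ?_ _
    exact Real.isLittleO_log_id_atTop.comp_tendsto tendsto_natCast_atTop_atTop
  obtain ⟨M3, hM30, hM3⟩ := rds_bdd _ ho (L / 3) (by positivity)
  refine ⟨L + ∑ i, Mi i + M3, L / 3, by positivity, fun j l hj hjl => ?_⟩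
  have hj1 : (1 : ℝ) ≤ j := by exact_mod_cast hj
  have hjl' : (j : ℝ) ≤ l := by exact_mod_cast hjl
  have hsum : ∑ i, β i * ((j : ℝ) ^ γ i + (l : ℝ) ^ γ i - ((j : ℝ) + l) ^ γ i)
      ≤ L / 3 * j + ∑ i, Mi i := by
    calc _ ≤ ∑ i, (L / 3 / (m + 1) * j + Mi i) := Finset.sum_le_sum fun i _ => hMi i j l
      _ = m * (L / 3 / (m + 1) * j) + ∑ i, Mi i := by
        rw [Finset.sum_add_distrib]; simp
      _ ≤ _ := by
        refine add_le_add ?_ le_rfl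
        have : (m : ℝ) * (L / 3 / (m + 1) * j) = (L / 3 * j) * (m / (m + 1)) := by ring
        rw [this]
        refine mul_le_of_le_one_right (by positivity) ?_
        rw [div_le_one (by positivity)]; linarith
  have hexp : rdsPhi α β γ j + rdsPhi α β γ l - rdsPhi α β γ ((j : ℝ) + l)
      = α * (j * Real.log j + l * Real.log l - (j + l) * Real.log ((j : ℝ) + l))
        + ∑ i, β i * ((j : ℝ) ^ γ i + (l : ℝ) ^ γ i - ((j : ℝ) + l) ^ γ i) := by
    simp only [rdsPhi, mul_sub, mul_add, Finset.sum_add_distrib, Finset.sum_sub_distrib]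
    ring
  have hl1 : Real.log l ≤ Real.log ((j : ℝ) + l) := Real.log_le_log (by linarith) (by linarith)
  have hl2 : Real.log 2 + Real.log j ≤ Real.log ((j : ℝ) + l) := by
    rw [← Real.log_mul (by norm_num) (by linarith)]
    exact Real.log_le_log (by linarith) (by linarith)
  have hmain : j * Real.log j + l * Real.log l - (j + l) * Real.log ((j : ℝ) + l)
      ≤ - Real.log ((j : ℝ) + l) - (j - 1) * Real.log 2 + Real.log j := by
    nlinarith [mul_le_mul_of_nonneg_left hl1 (by linarith : (0 : ℝ) ≤ l),
      mul_le_mul_of_nonneg_left hl2 (by linarith : (0 : ℝ) ≤ j - 1)]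
  have h4 := mul_le_mul_of_nonneg_left hmain hα.le
  have h5 := hM3 j
  rw [hexp]
  have h6 : α * (- Real.log ((j : ℝ) + l) - (j - 1) * Real.log 2 + Real.log j)
    = - (α * Real.log ((j : ℝ) + l)) - (j - 1) * L + α * Real.log j := by rw [hL]; ring
  rw [h6] at h4
  linarith

lemma rds_geom (r : ℝ) (h0 : 0 ≤ r) (h1 : r < 1) (n : ℕ) :
    ∑ k ∈ Finset.Ico 1 n, (r ^ k + r ^ (n - k)) ≤ 2 * (1 - r)⁻¹ := by
  have hs : ∑ k ∈ Finset.Ico 1 n, r ^ k ≤ (1 - r)⁻¹ := by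
    rw [← tsum_geometric_of_lt_one h0 h1]
    exact (summable_geometric_of_lt_one h0 h1).sum_le_tsum _ (fun i _ => by positivity)
  have hr : ∑ k ∈ Finset.Ico 1 n, r ^ (n - k) = ∑ k ∈ Finset.Ico 1 n, r ^ k := by
    refine Finset.sum_nbij' (fun k => n - k) (fun k => n - k) ?_ ?_ ?_ ?_ ?_ <;>
      intro k hk <;> simp only [Finset.mem_Ico] at * <;> omega
  rw [Finset.sum_add_distrib, hr]
  linarith

theorem rapidly_divergent_sequences (a : ℕ → ℝ) (C α : ℝ) (hC : 0 < C) (hα : 0 < α)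
    (m : ℕ) (β γ : Fin m → ℝ) (hγ : ∀ i, 0 < γ i ∧ γ i ≤ 1)
    (ha : Filter.Tendsto (fun n : ℕ => a n /
        (C * Real.exp (α * (n : ℝ) * Real.log (n : ℝ) + ∑ i, β i * (n : ℝ) ^ (γ i))))
      Filter.atTop (𝓝 1)) :
    (fun n : ℕ => ∑ k ∈ Finset.Ico 1 n, a k * a (n - k) / a n) =O[Filter.atTop]
      (fun n : ℕ => (n : ℝ) ^ (-α)) := by
  change Tendsto (fun n : ℕ => a n / (C * Real.exp (rdsPhi α β γ n))) atTop (𝓝 1) at ha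
  obtain ⟨M, ε, hε, hkey⟩ := rds_key α hα m β γ hγ
  have hbd : ∃ K, 0 ≤ K ∧ ∀ n : ℕ, |a n| ≤ K * Real.exp (rdsPhi α β γ n) := by
    obtain ⟨K, hK⟩ := ha.norm.bddAbove_range
    have hK' : ∀ n : ℕ, |a n / (C * Real.exp (rdsPhi α β γ n))| ≤ K := fun n => hK ⟨n, rfl⟩
    refine ⟨K * C, mul_nonneg ((abs_nonneg _).trans (hK' 0)) hC.le, fun n => ?_⟩
    have := hK' n
    rw [abs_div, abs_of_pos (by positivity : 0 < C * Real.exp (rdsPhi α β γ n)),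
      div_le_iff₀ (by positivity)] at this
    linarith
  obtain ⟨K, hK0, hK⟩ := hbd
  have hlow : ∀ᶠ n : ℕ in atTop, C / 2 * Real.exp (rdsPhi α β γ n) ≤ a n := by
    filter_upwards [ha.eventually (lt_mem_nhds (by norm_num : (1 / 2 : ℝ) < 1))] with n hn
    rw [lt_div_iff₀ (by positivity)] at hn
    linarith
  set r := Real.exp (-ε) with hr
  have hr1 : r < 1 := by rw [hr, Real.exp_lt_one_iff]; linarith
  have hr0 : 0 < r := Real.exp_pos _
  have hrk : ∀ k : ℕ, r ^ k = Real.exp (-ε * k) := fun k => by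
    rw [hr, ← Real.exp_nat_mul]; ring_nf
  have hsym : ∀ j l : ℕ, 1 ≤ j → 1 ≤ l →
      Real.exp (rdsPhi α β γ j) * Real.exp (rdsPhi α β γ l)
        ≤ Real.exp (rdsPhi α β γ ((j : ℝ) + l)) * (Real.exp M * ((j : ℝ) + l) ^ (-α) *
          (r ^ j + r ^ l)) := by
    have half : ∀ j l : ℕ, 1 ≤ j → j ≤ l →
      Real.exp (rdsPhi α β γ j) * Real.exp (rdsPhi α β γ l)
        ≤ Real.exp (rdsPhi α β γ ((j : ℝ) + l)) * (Real.exp M * ((j : ℝ) + l) ^ (-α) *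
          (r ^ j + r ^ l)) := by
      intro j l hj hjl
      have hpos : (0 : ℝ) < (j : ℝ) + l := by
        have : (1 : ℝ) ≤ j := by exact_mod_cast hj
        positivity
      have hk := hkey j l hj hjl
      calc _ ≤ Real.exp (rdsPhi α β γ ((j : ℝ) + l)) * (Real.exp M * ((j : ℝ) + l) ^ (-α) *
          r ^ j) := by
            rw [Real.rpow_def_of_pos hpos, hrk, ← Real.exp_add, ← Real.exp_add, ← Real.exp_add,
              ← Real.exp_add, Real.exp_le_exp]
            linarith
        _ ≤ _ := by
          gcongr
          have : 0 ≤ r ^ l := by positivity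
          linarith
    intro j l hj hl
    rcases le_total j l with h | h
    · exact half j l hj h
    · have := half l j hl h
      rw [mul_comm, add_comm (j : ℝ), add_comm (r ^ j)]
      exact this
  refine IsBigO.of_bound (K * K / (C / 2) * Real.exp M * (2 * (1 - r)⁻¹)) ?_
  filter_upwards [hlow] with n hn
  have hnn : (0 : ℝ) ≤ (n : ℝ) ^ (-α) := by positivity
  rw [Real.norm_of_nonneg hnn]
  have hterm : ∀ k ∈ Finset.Ico 1 n, ‖a k * a (n - k) / a n‖ ≤
      K * K / (C / 2) * Real.exp M * (n : ℝ) ^ (-α) * (r ^ k + r ^ (n - k)) := by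
    intro k hk
    rw [Finset.mem_Ico] at hk
    have hs := hsym k (n - k) hk.1 (by omega)
    have hcast : (k : ℝ) + ((n - k : ℕ) : ℝ) = n := by
      rw [Nat.cast_sub hk.2.le]; ring
    rw [hcast] at hs
    have hE := Real.exp_pos (rdsPhi α β γ n)
    have hapos : 0 < a n := lt_of_lt_of_le (by positivity) hn
    rw [Real.norm_eq_abs, abs_div, abs_mul, abs_of_pos hapos, div_le_iff₀ hapos]
    calc |a k| * |a (n - k)|
        ≤ (K * Real.exp (rdsPhi α β γ k)) * (K * Real.exp (rdsPhi α β γ (n - k : ℕ))) :=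
          mul_le_mul (hK _) (hK _) (abs_nonneg _) (by positivity)
      _ = K * K * (Real.exp (rdsPhi α β γ k) * Real.exp (rdsPhi α β γ (n - k : ℕ))) := by ring
      _ ≤ K * K * (Real.exp (rdsPhi α β γ n) * (Real.exp M * (n : ℝ) ^ (-α) *
          (r ^ k + r ^ (n - k)))) := by gcongr
      _ = K * K / (C / 2) * Real.exp M * (n : ℝ) ^ (-α) * (r ^ k + r ^ (n - k)) *
          (C / 2 * Real.exp (rdsPhi α β γ n)) := by field_simp
      _ ≤ _ := by gcongr
  calc _ ≤ ∑ k ∈ Finset.Ico 1 n,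
      K * K / (C / 2) * Real.exp M * (n : ℝ) ^ (-α) * (r ^ k + r ^ (n - k)) :=
        norm_sum_le_of_le _ hterm
    _ = K * K / (C / 2) * Real.exp M * (n : ℝ) ^ (-α) *
        ∑ k ∈ Finset.Ico 1 n, (r ^ k + r ^ (n - k)) := by rw [Finset.mul_sum]
    _ ≤ K * K / (C / 2) * Real.exp M * (n : ℝ) ^ (-α) * (2 * (1 - r)⁻¹) := by
        gcongr
        exact rds_geom r hr0.le hr1 n
    _ = _ := by ring
end
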